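/- arXiv:2106.14605 — 2 statements merged into one kernel-verified Lean document; each statement's English description precedes it below -/
import Mathlib

section
/- Let θ be the linear functional on (P_4)_{17} whose value is 1 exactly on the 44 monomials x_1^{a}x_2^{b}x_3^{c}x_4^{d} with (a,b,c,d) in the list {(5,5,5,2),(5,5,6,1),(3,5,8,1),(5,3,8,1),(3,6,7,1),(5,7,4,1),(7,5,4,1),(3,9,4,1),(9,3,4,1),(3,9,3,2),(9,3,3,2),(5,9,2,1),(9,5,2,1),(5,10,1,1),(9,6,1,1),(3,11,2,1),(11,3,2,1),(5,5,3,4),(5,3,5,4),(3,5,5,4),(3,12,1,1),(11,4,1,1),(7,8,1,1),(7,7,1,2),(13,2,1,1),(14,1,1,1),(6,5,3,3),(5,3,6,3),(3,6,5,3),(6,3,3,5),(3,3,6,5),(3,6,3,5),(5,3,3,6),(3,5,3,6),(3,3,5,6),(3,3,3,8),(3,3,4,7),(3,5,2,7),(3,6,1,7),(3,3,9,2),(3,3,10,1),(5,3,7,2),(5,7,3,2),(7,5,3,2)}, and 0 on every other monomial of degree 17. Then θ vanishes on every hit polynomial of degree 17; equivalently, θ(Sq^t(g)) = 0 for every t >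 0 and every g in (P_4)_{17−t}. -/
open MvPolynomial

noncomputable section

abbrev kk : Type := ZMod 2
abbrev P4 : Type := MvPolynomial (Fin 4) kk

/-- The total Steenrod square: the algebra endomorphism of `P4` with `X i ↦ X i + (X i)^2`.
For `g` homogeneous of degree `d`, `Sq^t g` is the degree-`d+t` homogeneous component
of `sqTotal g`. -/
def sqTotal : P4 →ₐ[kk] P4 := aeval fun i => X i + X i ^ 2

/-- The homogeneous polynomials of degree `n`, i.e. `(P_4)_n`, as a submodule. -/
def homog (n : ℕ) : Submodule kk P4 := homogeneousSubmodule (Fin 4) kk n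

/-- The subspace `H_n` of hit polynomials of degree `n`: it is spanned by the elements
`Sq^{n-d}(g) = (sqTotal g)_n` for `g` homogeneous of degree `d < n`, i.e. by all
`∑_{t>0} Sq^t(f_t)` with `f_t ∈ (P_4)_{n-t}`. -/
def hitSub (n : ℕ) : Submodule kk P4 :=
  Submodule.span kk
    {p | ∃ d, d < n ∧ ∃ g ∈ homog d, p = homogeneousComponent n (sqTotal g)}

/-- The exponent vector `(a, b, c, d)` of the monomial `x₁^a x₂^b x₃^c x₄^d`. -/
def ev (a b c d : ℕ) : Fin 4 →₀ ℕ := Finsupp.equivFunOnFinite.symm ![a, b, c, d]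

/-- The 44 exponent vectors of the monomials on which `θ` takes the value `1`. -/
def expList17 : List (Fin 4 →₀ ℕ) :=
  [ev 5 5 5 2, ev 5 5 6 1, ev 3 5 8 1, ev 5 3 8 1, ev 3 6 7 1, ev 5 7 4 1, ev 7 5 4 1,
   ev 3 9 4 1, ev 9 3 4 1, ev 3 9 3 2, ev 9 3 3 2, ev 5 9 2 1, ev 9 5 2 1, ev 5 10 1 1,
   ev 9 6 1 1, ev 3 11 2 1, ev 11 3 2 1, ev 5 5 3 4, ev 5 3 5 4, ev 3 5 5 4, ev 3 12 1 1,
   ev 11 4 1 1, ev 7 8 1 1, ev 7 7 1 2, ev 13 2 1 1, ev 14 1 1 1, ev 6 5 3 3, ev 5 3 6 3,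
   ev 3 6 5 3, ev 6 3 3 5, ev 3 3 6 5, ev 3 6 3 5, ev 5 3 3 6, ev 3 5 3 6, ev 3 3 5 6,
   ev 3 3 3 8, ev 3 3 4 7, ev 3 5 2 7, ev 3 6 1 7, ev 3 3 9 2, ev 3 3 10 1, ev 5 3 7 2,
   ev 5 7 3 2, ev 7 5 3 2]

/-!
The total Steenrod square is multiplicative, so the coefficient of `x^e` in `Sq(x^m)` is the product
over the variables of the coefficients of `x^(e i)` in `(x + x²)^(m i)`, that is, of the binomial
coefficients `C(m i, e i - m i)` modulo 2. All exponent vectors of `θ` have degree 17, so `θ` does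
not distinguish `Sq(g)` from its component of degree 17. By linearity, `θ` vanishes on the hit
polynomials once `Sq(x^m)` meets the support of `θ` in an even number of monomials for every `m` of
degree less than 17. Every `m` for which this number is nonzero lies among the finitely many
exponent vectors obtained from the support of `θ` by the transposed square, and for these the
parity is computed.
-/

section Coefficients

variable {R : Type*} [CommSemiring R]

lemma coeff_prod_aeval_X {σ : Type*} [Fintype σ] (p : σ → Polynomial R) (e : σ →₀ ℕ) :
    coeff e (∏ i, Polynomial.aeval (X i) (p i)) = ∏ i, (p i).coeff (e i) := by
  classical
  have expand : ∏ i, Polynomial.aeval (X i : MvPolynomial σ R) (p i) =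
      ∑ q ∈ Fintype.piFinset fun i => Finset.range ((p i).natDegree + 1),
        monomial (Finsupp.equivFunOnFinite.symm q) (∏ i, (p i).coeff (q i)) := by
    simp only [Polynomial.aeval_eq_sum_range, Finset.prod_univ_sum, smul_eq_C_mul,
      Finset.prod_mul_distrib, monomial_eq, map_prod,
      Finsupp.prod_fintype _ _ fun _ => pow_zero _, Finsupp.coe_equivFunOnFinite_symm]
  simp only [expand, coeff_sum, coeff_monomial, Equiv.symm_apply_eq]
  rw [Finset.sum_ite_eq']
  refine ite_eq_left_iff.mpr fun he => ?_
  obtain ⟨i, hi⟩ : ∃ i, (p i).natDegree < e i := by simpa [Nat.lt_succ_iff] using he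
  exact (Finset.prod_eq_zero (Finset.mem_univ i)
    (Polynomial.coeff_eq_zero_of_natDegree_lt hi)).symm

lemma coeff_X_add_X_sq_pow (n k : ℕ) :
    ((Polynomial.X + Polynomial.X ^ 2 : Polynomial R) ^ n).coeff k =
      if n ≤ k then (n.choose (k - n) : R) else 0 := by
  rw [show (Polynomial.X + Polynomial.X ^ 2 : Polynomial R) =
      Polynomial.X * (1 + Polynomial.X) by ring, mul_pow, Polynomial.coeff_X_pow_mul',
    Polynomial.coeff_one_add_X_pow]

end Coefficients

/-- The monomial `x^k` occurs in the total square `(x + x²)^n` of `x^n` over `F_2`. -/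
def OccursInSq (n k : ℕ) : Prop := n ≤ k ∧ Odd (n.choose (k - n))

instance : DecidableRel OccursInSq := fun _ _ => inferInstanceAs (Decidable (_ ∧ _))

lemma coeff_X_add_X_sq_pow_eq_ite (n k : ℕ) :
    ((Polynomial.X + Polynomial.X ^ 2 : Polynomial kk) ^ n).coeff k =
      if OccursInSq n k then 1 else 0 := by
  have choose_cast : (n.choose (k - n) : kk) = if Odd (n.choose (k - n)) then 1 else 0 := by
    split_ifs with h
    · exact ZMod.natCast_eq_one_iff_odd.mpr h
    · exact ZMod.natCast_eq_zero_iff_even.mpr (Nat.not_odd_iff_even.mp h)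
  rw [coeff_X_add_X_sq_pow, choose_cast, ← ite_and]
  rfl

lemma coeff_sqTotal_monomial (m e : Fin 4 →₀ ℕ) :
    coeff e (sqTotal (monomial m 1)) = if ∀ i, OccursInSq (m i) (e i) then 1 else 0 := by
  have total : sqTotal (monomial m 1) =
      ∏ i, Polynomial.aeval (X i) ((Polynomial.X + Polynomial.X ^ 2 : Polynomial kk) ^ m i) := by
    rw [sqTotal, aeval_monomial, map_one, one_mul,
      Finsupp.prod_fintype _ _ fun _ => pow_zero _]
    simp only [map_pow, map_add, Polynomial.aeval_X]
  simp only [total, coeff_prod_aeval_X, coeff_X_add_X_sq_pow_eq_ite, Finset.prod_ite_zero,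
    Finset.mem_univ, true_imp_iff, Finset.prod_const_one]

/-- The sum of the coefficients at the exponent vectors in `L`, as a linear functional;
repeated entries are counted with multiplicity. -/
def coeffSum (L : List (Fin 4 →₀ ℕ)) : P4 →ₗ[kk] kk := (L.map (lcoeff kk)).sum

lemma coeffSum_apply (L : List (Fin 4 →₀ ℕ)) (f : P4) :
    coeffSum L f = (L.map fun e => coeff e f).sum := by
  induction L with
  | nil => rfl
  | cons e L ih => simpa [coeffSum] using ih

lemma coeffSum_sqTotal_monomial (L : List (Fin 4 →₀ ℕ)) (m : Fin 4 →₀ ℕ) :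
    coeffSum L (sqTotal (monomial m 1)) =
      (L.countP fun e => ∀ i, OccursInSq (m i) (e i) : ℕ) := by
  simp [coeffSum_apply, coeff_sqTotal_monomial, List.sum_map_ite, List.countP_eq_length_filter]

lemma coeffSum_homogeneousComponent {L : List (Fin 4 →₀ ℕ)} {n : ℕ}
    (hL : ∀ e ∈ L, e.degree = n) (f : P4) :
    coeffSum L (homogeneousComponent n f) = coeffSum L f := by
  simp only [coeffSum_apply]
  exact congrArg _ (List.map_congr_left fun e he => by
    rw [coeff_homogeneousComponent, if_pos (hL e he)])

lemma homog_le_ker {φ : P4 →ₗ[kk] kk} {d : ℕ}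
    (hφ : ∀ m : Fin 4 →₀ ℕ, m.degree = d → φ (monomial m 1) = 0) :
    homog d ≤ LinearMap.ker φ := by
  intro g hg
  rw [LinearMap.mem_ker, g.as_sum, map_sum]
  refine Finset.sum_eq_zero fun m hm => ?_
  have hm_degree : m.degree = d := by
    rw [Finsupp.degree_eq_weight_one]
    exact (mem_homogeneousSubmodule d g).mp hg (mem_support_iff.mp hm)
  rw [← mul_one (coeff m g), ← smul_eq_mul, ← smul_monomial, map_smul, hφ m hm_degree, smul_zero]

lemma hitSub_le_ker_coeffSum {L : List (Fin 4 →₀ ℕ)} {n : ℕ} (hL : ∀ e ∈ L, e.degree = n)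
    (h_even : ∀ m : Fin 4 →₀ ℕ, m.degree < n →
      Even (L.countP fun e => ∀ i, OccursInSq (m i) (e i))) :
    hitSub n ≤ LinearMap.ker (coeffSum L) := by
  refine Submodule.span_le.mpr ?_
  rintro _ ⟨d, hd, g, hg, rfl⟩
  have sq_le_ker : homog d ≤ LinearMap.ker (coeffSum L ∘ₗ sqTotal.toLinearMap) :=
    homog_le_ker fun m hm => (coeffSum_sqTotal_monomial L m).trans
      (ZMod.natCast_eq_zero_iff_even.mpr (h_even m (hm ▸ hd)))
  exact (coeffSum_homogeneousComponent hL _).trans (sq_le_ker hg)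

/-- The exponents `n` such that `x^k` occurs in the total square of `x^n`. -/
def sqSources (k : ℕ) : List ℕ := (List.range (k + 1)).filter (OccursInSq · k)

lemma mem_sqSources {n k : ℕ} : n ∈ sqSources k ↔ OccursInSq n k := by
  simp only [sqSources, List.mem_filter, List.mem_range, Nat.lt_succ_iff, decide_eq_true_eq,
    and_iff_right_iff_imp]
  exact And.left

lemma degree_of_mem_expList17 {e : Fin 4 →₀ ℕ} (he : e ∈ expList17) : e.degree = 17 := by
  have sum_eq : ∀ e ∈ expList17, ∑ i, e i = 17 := by decide +kernel
  rw [Finsupp.degree_eq_sum, sum_eq e he]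

lemma even_countP_expList17_of_mem_sqSources : ∀ e ∈ expList17,
    ∀ a ∈ sqSources (e 0), ∀ b ∈ sqSources (e 1), ∀ c ∈ sqSources (e 2), ∀ d ∈ sqSources (e 3),
      a + b + c + d < 17 →
        Even (expList17.countP fun e' => ∀ i, OccursInSq (ev a b c d i) (e' i)) := by
  decide +kernel

lemma even_countP_expList17 (m : Fin 4 →₀ ℕ) (hm : m.degree < 17) :
    Even (expList17.countP fun e => ∀ i, OccursInSq (m i) (e i)) := by
  by_cases h : ∃ e ∈ expList17, ∀ i, OccursInSq (m i) (e i)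
  · obtain ⟨e, he, hme⟩ := h
    have m_eq : m = ev (m 0) (m 1) (m 2) (m 3) := by
      ext i
      fin_cases i <;> rfl
    rw [Finsupp.degree_eq_sum, Fin.sum_univ_four] at hm
    rw [m_eq]
    exact even_countP_expList17_of_mem_sqSources e he
      _ (mem_sqSources.mpr (hme 0)) _ (mem_sqSources.mpr (hme 1))
      _ (mem_sqSources.mpr (hme 2)) _ (mem_sqSources.mpr (hme 3)) hm
  · have count_eq_zero : expList17.countP (fun e => ∀ i, OccursInSq (m i) (e i)) = 0 := by
      simpa [List.countP_eq_zero] using h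
    exact count_eq_zero ▸ Even.zero

/-- The linear functional on `(P_4)_17` taking the value `1` exactly on the 44 listed
monomials vanishes on every hit polynomial of degree `17`. -/
theorem statement_17 :
    ∀ f ∈ hitSub 17, (expList17.map fun d => coeff d f).sum = 0 := by
  intro f hf
  rw [← coeffSum_apply]
  exact hitSub_le_ker_coeffSum (fun _ => degree_of_mem_expList17) even_countP_expList17 hf

end
end

section
/- For every integer s ≥ 5, let θ_s be the linear functional on (P_4)_{3·2^s−2} whose value is 1 on the single monomial x_1x_2^{2^{s−1}−1}x_3^{2^{s−1}−1}x_4^{2^{s+1}−1} and 0 on every other monomial of degree 3·2^s − 2. Then θ_s vanishes on every hit polynomial of degree 3·2^s − 2; equivalently, θ_s(Sq^t(g)) = 0 for every t > 0 and every g in (P_4)_{3·2^s−2−t}. -/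
open MvPolynomial

noncomputable section

/-!
In characteristic `p` the total power multiplies `x ^ e` by `∏ i, (1 + x_i ^ (p - 1)) ^ e_i`, so
the coefficient of `x ^ (e + (p - 1) u)` in its value is `∏ i, (e_i).choose u_i`. If this exponent
is a spike, so that `e_i + (p - 1) u_i + 1 = c p ^ m` with `c < p`, and `p ∤ (e_i).choose u_i`, then
`u_i = 0`. Indeed, write `n = e_i` and `j = u_i`. If `p ^ k ∣ j` and `k < m`, then `n + 1 ≡ j`
modulo `p ^ (k + 1)`, and `n.choose j * (n + 1) = (n + 1).choose j * (n + 1 - j)` gives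
`p ^ (k + 1) ∣ j`. Hence `p ^ m ∣ j`, whereas `j < p ^ m`. So the total power preserves the
coefficient at a spike, which means that every operation of positive degree kills it.
-/

theorem pow_dvd_of_succ_modEq_of_not_dvd_choose {p k n j : ℕ} (hp : p.Prime)
    (hchoose : ¬ p ∣ n.choose j) (hmod : n + 1 ≡ j [MOD p ^ k]) : p ^ k ∣ j := by
  have hjn : j ≤ n := not_lt.1 fun hlt => hchoose (Nat.choose_eq_zero_of_lt hlt ▸ dvd_zero p)
  have hsub : p ^ k ∣ n + 1 - j := (Nat.modEq_iff_dvd' (by omega)).1 hmod.symm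
  have hmul : p ^ k ∣ n.choose j * (n + 1) := by
    rw [Nat.choose_mul_succ_eq]
    exact hsub.mul_left _
  have hcop : (p ^ k).Coprime (n.choose j) := (hp.coprime_iff_not_dvd.2 hchoose).pow_left k
  exact (hmod.dvd_iff dvd_rfl).1 (hcop.dvd_of_dvd_mul_left hmul)

theorem eq_zero_of_add_pred_mul_of_not_dvd_choose {p c m n j : ℕ} (hp : p.Prime)
    (hc : c < p) (hadd : n + (p - 1) * j + 1 = c * p ^ m)
    (hchoose : ¬ p ∣ n.choose j) : j = 0 := by
  have hpow : ∀ k ≤ m, p ^ k ∣ j := by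
    intro k hk
    induction k with
    | zero => exact one_dvd j
    | succ k ih =>
      have hleft : p ^ (k + 1) ∣ n + 1 + (p - 1) * j := by
        rw [add_right_comm, hadd]
        exact (pow_dvd_pow p hk).mul_left c
      have hright : p ^ (k + 1) ∣ j + (p - 1) * j := by
        rw [← one_add_mul, Nat.add_sub_cancel' hp.one_le, pow_succ']
        exact mul_dvd_mul_left p (ih (by omega))
      have hmod : n + 1 ≡ j [MOD p ^ (k + 1)] :=
        Nat.ModEq.add_right_cancel' _ (hleft.modEq_zero_nat.trans hright.modEq_zero_nat.symm)
      exact pow_dvd_of_succ_modEq_of_not_dvd_choose hp hchoose hmod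
  have hlt : (p - 1) * j < (p - 1) * p ^ m :=
    calc (p - 1) * j < c * p ^ m := by omega
      _ ≤ (p - 1) * p ^ m := Nat.mul_le_mul_right _ (Nat.le_sub_one_of_lt hc)
  exact Nat.eq_zero_of_dvd_of_lt (hpow m le_rfl) (Nat.lt_of_mul_lt_mul_left hlt)

section

variable {σ R : Type*} [CommSemiring R]

theorem one_add_X_pow_eq_sum_monomial (i : σ) (n : ℕ) :
    (1 + X i : MvPolynomial σ R) ^ n =
      ∑ l ∈ Finset.range (n + 1), monomial (Finsupp.single i l) (n.choose l : R) := by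
  rw [add_comm, add_pow]
  refine Finset.sum_congr rfl fun l _ => ?_
  rw [one_pow, mul_one, X_pow_eq_monomial, ← map_natCast C, mul_comm, C_mul_monomial, mul_one]

theorem coeff_one_add_X_pow_mul {i : σ} {f : MvPolynomial σ R}
    (hf : ∀ w, w i ≠ 0 → coeff w f = 0) (n : ℕ) (u : σ →₀ ℕ) :
    coeff u ((1 + X i) ^ n * f) = n.choose (u i) * coeff (u.erase i) f := by
  have herase : u - Finsupp.single i (u i) = u.erase i :=
    tsub_eq_of_eq_add (u.erase_add_single i).symm
  rw [one_add_X_pow_eq_sum_monomial, Finset.sum_mul, coeff_sum]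
  simp only [coeff_monomial_mul', Finsupp.single_le_iff]
  rw [Finset.sum_eq_single (u i), if_pos le_rfl, herase]
  · intro l _ hl
    refine ite_eq_right_iff.2 fun hle => ?_
    have hne : (u - Finsupp.single i l) i ≠ 0 := by
      rw [Finsupp.tsub_apply, Finsupp.single_eq_same]
      omega
    rw [hf _ hne, mul_zero]
  · intro hn
    rw [Nat.choose_eq_zero_of_lt (by simpa using hn), Nat.cast_zero, zero_mul, ite_self]

theorem prod_choose_eq_zero {e u : σ →₀ ℕ} {i : σ} (h : ((e i).choose (u i) : R) = 0) :
    (u.prod fun i k => ((e i).choose k : R)) = 0 := by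
  rw [← u.mul_prod_erase' i _ fun j => by rw [Nat.choose_zero_right, Nat.cast_one], h, zero_mul]

theorem prod_choose_eq_zero_of_lt {e u : σ →₀ ℕ} {i : σ} (h : e i < u i) :
    (u.prod fun i k => ((e i).choose k : R)) = 0 :=
  prod_choose_eq_zero (by rw [Nat.choose_eq_zero_of_lt h, Nat.cast_zero])

theorem coeff_prod_one_add_X_pow (e u : σ →₀ ℕ) :
    coeff u (e.prod fun i k => (1 + X i : MvPolynomial σ R) ^ k) =
      u.prod fun i k => ((e i).choose k : R) := by
  classical
  induction e using Finsupp.induction generalizing u with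
  | zero =>
    rw [Finsupp.prod_zero_index]
    obtain rfl | hu := eq_or_ne u 0
    · simp
    · obtain ⟨i, hi⟩ := Finsupp.ne_iff.1 hu
      rw [coeff_one, if_neg hu.symm, prod_choose_eq_zero_of_lt (Nat.pos_of_ne_zero hi)]
  | single_add i a e hi _ ih =>
    have hei : e i = 0 := Finsupp.notMem_support_iff.1 hi
    have hvanish (w : σ →₀ ℕ) (hw : w i ≠ 0) :
        coeff w (e.prod fun i k => (1 + X i : MvPolynomial σ R) ^ k) = 0 := by
      rw [ih, prod_choose_eq_zero_of_lt (hei.trans_lt (Nat.pos_of_ne_zero hw))]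
    have hprod : ((Finsupp.single i a + e).prod fun i k => (1 + X i : MvPolynomial σ R) ^ k) =
        (1 + X i) ^ a * e.prod fun i k => (1 + X i) ^ k := by
      rw [Finsupp.prod_add_index' (fun _ => pow_zero _) (fun _ => pow_add _)]
      exact congrArg (· * _) (Finsupp.prod_single_index (pow_zero _))
    rw [hprod, coeff_one_add_X_pow_mul hvanish, ih,
      ← u.mul_prod_erase' i _ fun j => by rw [Nat.choose_zero_right, Nat.cast_one]]
    congr 1
    · rw [Finsupp.add_apply, Finsupp.single_eq_same, hei, add_zero]
    · refine Finsupp.prod_congr fun j hj => ?_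
      have hji : j ≠ i := Finset.ne_of_mem_erase (Finsupp.support_erase (f := u) ▸ hj)
      rw [Finsupp.add_apply, Finsupp.single_eq_of_ne hji, zero_add]

/-- The total Steenrod reduced power on a polynomial algebra in characteristic `p`. For `p = 2` it
is the total Steenrod square `sqTotal`; for odd `p` it is `∑ t, P^t`, where `P^t` raises the
polynomial degree by `t * (p - 1)`. The operations are extended linearly to coefficients in `R`. -/
def totalReducedPower (p : ℕ) : MvPolynomial σ R →ₐ[R] MvPolynomial σ R :=
  aeval fun i => X i + X i ^ p

theorem totalReducedPower_monomial {p : ℕ} (hp : p ≠ 0) (e : σ →₀ ℕ) (r : R) :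
    totalReducedPower p (monomial e r) =
      monomial e r * expand (p - 1) (e.prod fun i k => (1 + X i) ^ k) := by
  have hX (i : σ) : (X i + X i ^ p : MvPolynomial σ R) = X i * (1 + X i ^ (p - 1)) := by
    rw [mul_add, mul_one, mul_pow_sub_one hp]
  simp only [totalReducedPower, aeval_monomial, algebraMap_eq, hX, mul_pow, Finsupp.prod_mul,
    map_finsuppProd, map_pow, map_add, map_one, expand_X]
  rw [monomial_eq, mul_assoc]

theorem coeff_totalReducedPower_monomial_add_smul {p : ℕ} (hp : 1 < p) (e u : σ →₀ ℕ) (r : R) :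
    coeff (e + (p - 1) • u) (totalReducedPower p (monomial e r)) =
      r * u.prod fun i k => ((e i).choose k : R) := by
  rw [totalReducedPower_monomial (Nat.ne_zero_of_lt hp), coeff_monomial_mul,
    coeff_expand_smul _ (Nat.sub_ne_zero_of_lt hp), coeff_prod_one_add_X_pow]

theorem coeff_totalReducedPower_monomial_eq_zero {p : ℕ} (hp : p ≠ 0) {e v : σ →₀ ℕ}
    (hv : ∀ u, v ≠ e + (p - 1) • u) (r : R) : coeff v (totalReducedPower p (monomial e r)) = 0 := by
  classical
  rw [totalReducedPower_monomial hp, coeff_monomial_mul']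
  refine ite_eq_right_iff.2 fun hle => ?_
  rw [notMem_support_iff.1, mul_zero]
  intro hmem
  obtain ⟨u, -, hu⟩ := Finset.mem_image.1 (support_expand_subset _ hmem)
  exact hv u (by rw [hu, add_tsub_cancel_of_le hle])

/-- A spike: an exponent vector all of whose entries are of the form `c * p ^ m - 1` with
`1 ≤ c < p`. The coefficient at a spike is a functional annihilated by the reduced powers.
The equation is written without subtraction, which also excludes `c = 0`. -/
def IsSpike (p : ℕ) (v : σ →₀ ℕ) : Prop := ∀ i, ∃ c < p, ∃ m, v i + 1 = c * p ^ m

theorem coeff_totalReducedPower_monomial_of_isSpike {p : ℕ} [Fact p.Prime] [CharP R p] {v : σ →₀ ℕ}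
    (hv : IsSpike p v) (e : σ →₀ ℕ) (r : R) :
    coeff v (totalReducedPower p (monomial e r)) = coeff v (monomial e r) := by
  classical
  have hp : p.Prime := Fact.out
  obtain rfl | hne := eq_or_ne v e
  · simpa using coeff_totalReducedPower_monomial_add_smul hp.one_lt v 0 r
  rw [coeff_monomial, if_neg hne.symm]
  by_cases hu : ∀ u, v ≠ e + (p - 1) • u
  · exact coeff_totalReducedPower_monomial_eq_zero hp.ne_zero hu r
  · push Not at hu
    obtain ⟨u, rfl⟩ := hu
    have hu_ne : u ≠ 0 := by
      rintro rfl
      exact hne (by rw [smul_zero, add_zero])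
    obtain ⟨i, hi⟩ := Finsupp.ne_iff.1 hu_ne
    obtain ⟨c, hc, m, hm⟩ := hv i
    have hchoose : p ∣ (e i).choose (u i) :=
      not_not.1 fun hndvd => hi (eq_zero_of_add_pred_mul_of_not_dvd_choose hp hc hm hndvd)
    rw [coeff_totalReducedPower_monomial_add_smul hp.one_lt,
      prod_choose_eq_zero ((CharP.cast_eq_zero_iff R p _).2 hchoose), mul_zero]

theorem coeff_totalReducedPower_of_isSpike {p : ℕ} [Fact p.Prime] [CharP R p] {v : σ →₀ ℕ}
    (hv : IsSpike p v) (f : MvPolynomial σ R) : coeff v (totalReducedPower p f) = coeff v f := by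
  induction f using MvPolynomial.induction_on' with
  | monomial e r => exact coeff_totalReducedPower_monomial_of_isSpike hv e r
  | add f g hf hg => rw [map_add, coeff_add, coeff_add, hf, hg]

/-- The space of hit polynomials of degree `n`: those spanned by the values of reduced powers of
positive degree. For `p = 2` it generalizes `hitSub` to arbitrary variables and coefficients. -/
def hitSubmodule (σ R : Type*) [CommSemiring R] (p n : ℕ) : Submodule R (MvPolynomial σ R) :=
  Submodule.span R
    {f | ∃ d, d < n ∧ ∃ g ∈ homogeneousSubmodule σ R d,
      f = homogeneousComponent n (totalReducedPower p g)}

theorem statement_18_general {p : ℕ} [Fact p.Prime] [CharP R p] {v : σ →₀ ℕ} (hv : IsSpike p v)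
    {n : ℕ} {f : MvPolynomial σ R} (hf : f ∈ hitSubmodule σ R p n) : coeff v f = 0 := by
  suffices hle : hitSubmodule σ R p n ≤ LinearMap.ker (lcoeff R v) from hle hf
  refine Submodule.span_le.2 ?_
  rintro _ ⟨d, hd, g, hg, rfl⟩
  change coeff v (homogeneousComponent n (totalReducedPower p g)) = 0
  rw [coeff_homogeneousComponent, coeff_totalReducedPower_of_isSpike hv, ite_eq_right_iff]
  exact fun hn => hg.coeff_eq_zero (hn.trans_ne hd.ne')

end

theorem isSpike_ev (a b c d : ℕ) :
    IsSpike 2 (ev (2 ^ a - 1) (2 ^ b - 1) (2 ^ c - 1) (2 ^ d - 1)) := by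
  have hspike (m : ℕ) : ∃ c < 2, ∃ l, 2 ^ m - 1 + 1 = c * 2 ^ l :=
    ⟨1, one_lt_two, m, by rw [one_mul, Nat.sub_add_cancel Nat.one_le_two_pow]⟩
  exact Fin.forall_fin_succ.2
    ⟨hspike a, Fin.forall_fin_succ.2 ⟨hspike b, Fin.forall_fin_two.2 ⟨hspike c, hspike d⟩⟩⟩

/-- For `s ≥ 5`, the linear functional on `(P_4)_{3·2^s-2}` taking the value `1` exactly on
the monomial `x₁ x₂^{2^{s-1}-1} x₃^{2^{s-1}-1} x₄^{2^{s+1}-1}` vanishes on every hit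
polynomial of degree `3·2^s - 2`. -/
theorem statement_18 (s : ℕ) (hs : 5 ≤ s) :
    ∀ f ∈ hitSub (3 * 2 ^ s - 2),
      coeff (ev 1 (2 ^ (s - 1) - 1) (2 ^ (s - 1) - 1) (2 ^ (s + 1) - 1)) f = 0 :=
  fun _ hf => statement_18_general (isSpike_ev 1 (s - 1) (s - 1) (s + 1)) hf

end
end
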